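/- arXiv:1604.08639 — 2 statements merged into one kernel-verified Lean document; each statement's English description precedes it below -/
import Mathlib

section
/- Let D be a finite set of positive integers with at least two elements, let e ∈ D with e ∈ {3, 4, 6}, and set η_e = ∏_{d ∈ D \ {e}} Φ_d(ζ_e) ∈ ℤ[ζ_e]. If the principal ideal η_e ℤ[ζ_e] equals (1 − ζ_e)^k ℤ[ζ_e] for some k ∈ {1, 2}, and O(D \ {e}) is a GE_2-ring, then O(D) is a GE_2-ring. -/
/-!
The ring `O(D)` is the fibre product of `ℤ[ζ_e]` and `O(D \ {e})` over a common quotient `L` of the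
two rings. In `L` the element `η_e` vanishes, hence so does `(1 - X) ^ 2`: the image of `X` is a
unipotent unit, so its powers are linear in it, and every element of `L` is, up to adding `1`, of
the form `± X ^ i`. Thus `L` is zero or a local ring whose units all lift to units of `O(D)`.

Cohn's relations between the matrices `E x = !![x, -1; 1, 0]` contract a product of three of them
whose middle entry is a unit, so over such an `L` every product takes the form
`diag(u, u⁻¹) * E x * E y * E z`, and this is trivial only as a consequence of the relations.
Therefore an element of `E₂(O(D))` trivial over `L` is a product of one trivial over `ℤ[ζ_e]` and
one trivial over `O(D \ {e})`, and this lets two factorizations of a matrix of determinant one, over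
`O(D \ {e})` and over the norm-Euclidean ring `ℤ[ζ_e]`, be patched to a factorization over `O(D)`.
-/

/-- The set of `n × n` elementary matrices over `R`: matrices differing from the
identity by a single off-diagonal entry. -/
def ElemMatrices (n : ℕ) (R : Type*) [CommRing R] : Set (Matrix (Fin n) (Fin n) R) :=
  {M | ∃ (i j : Fin n) (c : R), i ≠ j ∧ M = Matrix.transvection i j c}

/-- `R` is a `GE_n`-ring: every matrix of determinant one is a product of
elementary matrices, i.e. `SL_n(R) = E_n(R)`. -/
def IsGE (R : Type*) [CommRing R] (n : ℕ) : Prop :=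
  ∀ A : Matrix (Fin n) (Fin n) R, A.det = 1 → A ∈ Submonoid.closure (ElemMatrices n R)

/-- `R` is a generalized Euclidean ring: a `GE_n`-ring for every `n ≥ 2`. -/
def IsGERing (R : Type*) [CommRing R] : Prop := ∀ n, 2 ≤ n → IsGE R n

/-- The primitive `e`-th root of unity `ζ_e = e^{2πi/e}`. -/
noncomputable def zeta (e : ℕ) : ℂ := Complex.exp (2 * Real.pi * Complex.I / e)

/-- The subring `ℤ[ζ_e]` of `ℂ`. -/
noncomputable def Zzeta (e : ℕ) : Subalgebra ℤ ℂ := Algebra.adjoin ℤ {zeta e}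

/-- `ζ_e` as an element of `ℤ[ζ_e]`. -/
noncomputable def zetaEl (e : ℕ) : Zzeta e :=
  ⟨zeta e, Algebra.self_mem_adjoin_singleton ℤ _⟩

/-- `η_e = ∏_{d ∈ D \ {e}} Φ_d(ζ_e)` as an element of `ℤ[ζ_e]`. -/
noncomputable def eta (D : Finset ℕ) (e : ℕ) : Zzeta e :=
  ∏ d ∈ D.erase e, Polynomial.aeval (zetaEl e) (Polynomial.cyclotomic d ℤ)

namespace GE2

open Function

section CohnRelations

variable {R L G Q : Type*} [CommRing R] [CommRing L] [Group G] [Group Q]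
  {E : R → G} {h : Rˣ →* G}

/-- Cohn's defining relations of the universal `GE₂`-group of `R`, restricted to determinant one.
Here `E x` stands for the matrix `!![x, -1; 1, 0]` and `h u` for `diag(u, u⁻¹)`. -/
structure CohnRelations (E : R → G) (h : Rˣ →* G) : Prop where
  mul_zero_mul : ∀ x y, E x * E 0 * E y = h (-1) * E (x + y)
  unit_mul_inv_mul : ∀ u : Rˣ, E u * E ↑u⁻¹ * E u = h (-u)
  mul_diag : ∀ x u, E x * h u = h u⁻¹ * E (u ^ 2 * x)

/-- Every `r : R` is congruent along `σ` to a unit of `R` or to a unit plus one. For surjective `σ`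
this says that `L` is zero or a local ring, all of whose units lift to units of `R`. -/
def IsLocalUnitLifting (σ : R →+* L) : Prop :=
  ∀ r, ∃ u : Rˣ, σ u = σ r ∨ σ u = σ (r - 1)

/-- The map `E` with values in the subgroup it generates. -/
def toClosure {X : Type*} (E : X → G) (x : X) : Subgroup.closure (Set.range E) :=
  ⟨E x, Subgroup.subset_closure ⟨x, rfl⟩⟩

lemma closure_range_toClosure {X : Type*} (E : X → G) :
    Subgroup.closure (Set.range (toClosure E)) = ⊤ := by
  rw [← Subgroup.closure_closure_coe_preimage (k := Set.range E)]
  congr 1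
  ext g
  simp [toClosure, Subtype.ext_iff]

namespace CohnRelations

lemma map (H : CohnRelations E h) (π : G →* Q) : CohnRelations (π ∘ E) (π.comp h) where
  mul_zero_mul x y := by
    simp only [Function.comp_apply, MonoidHom.comp_apply, ← _root_.map_mul π, H.mul_zero_mul]
  unit_mul_inv_mul u := by
    simp only [Function.comp_apply, MonoidHom.comp_apply, ← _root_.map_mul π, H.unit_mul_inv_mul]
  mul_diag x u := by
    simp only [Function.comp_apply, MonoidHom.comp_apply, ← _root_.map_mul π, H.mul_diag]

lemma zero_mul_zero (H : CohnRelations E h) : E 0 * E 0 = h (-1) :=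
  mul_right_cancel (b := E 0) ((H.mul_zero_mul 0 0).trans (by rw [add_zero]))

lemma diag_neg_one_mul_self (h : Rˣ →* G) : h (-1) * h (-1) = 1 := by simp [← map_mul]

lemma mul_diag_neg_one (H : CohnRelations E h) (x : R) : E x * h (-1) = h (-1) * E x := by
  simpa using H.mul_diag x (-1)

lemma mul_diag_neg_one_mul (H : CohnRelations E h) (x : R) (g : G) :
    E x * (h (-1) * g) = h (-1) * (E x * g) := by
  rw [← mul_assoc, H.mul_diag_neg_one, mul_assoc]

lemma diag_mul_eq_one (H : CohnRelations E h) (u : Rˣ) :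
    h u * (E (-↑u⁻¹) * E (-u) * E (-↑u⁻¹)) = 1 := by
  have hu : E (-↑u⁻¹) * E (-u) * E (-↑u⁻¹) = h u⁻¹ := by simpa using H.unit_mul_inv_mul (-u⁻¹)
  rw [hu, ← _root_.map_mul, mul_inv_cancel, map_one]

lemma inv_eq (H : CohnRelations E h) (x : R) : (E x)⁻¹ = E 0 * E (-x) * E 0 := by
  rw [inv_eq_iff_mul_eq_one, ← mul_assoc, ← mul_assoc, H.mul_zero_mul, add_neg_cancel, mul_assoc,
    H.zero_mul_zero, diag_neg_one_mul_self]

lemma diag_mem_closure (H : CohnRelations E h) (u : Rˣ) :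
    h u ∈ Subgroup.closure (Set.range E) := by
  have hE x : E x ∈ Subgroup.closure (Set.range E) := Subgroup.subset_closure ⟨x, rfl⟩
  rw [← neg_neg u, ← H.unit_mul_inv_mul]
  exact mul_mem (mul_mem (hE _) (hE _)) (hE _)

lemma toClosure (H : CohnRelations E h) :
    CohnRelations (toClosure E) (h.codRestrict _ H.diag_mem_closure) where
  mul_zero_mul x y := Subtype.ext (H.mul_zero_mul x y)
  unit_mul_inv_mul u := Subtype.ext (H.unit_mul_inv_mul u)
  mul_diag x u := Subtype.ext (H.mul_diag x u)

@[elab_as_elim]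
lemma closure_induction (H : CohnRelations E h) {p : G → Prop} (one : p 1)
    (mul_left : ∀ x g, p g → p (E x * g)) {g : G} (hg : g ∈ Subgroup.closure (Set.range E)) :
    p g := by
  induction hg using Subgroup.closure_induction_left with
  | one => exact one
  | mul_left x hx g _ ih =>
    obtain ⟨x, rfl⟩ := hx
    exact mul_left x g ih
  | inv_mul_cancel x hx g _ ih =>
    obtain ⟨x, rfl⟩ := hx
    simpa only [H.inv_eq, mul_assoc] using mul_left _ _ (mul_left _ _ (mul_left _ _ ih))

lemma split_left (H : CohnRelations E h) (x y : R) :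
    E x = h (-1) * (E (x - y) * E 0 * E y) := by
  rw [H.mul_zero_mul, ← mul_assoc, diag_neg_one_mul_self, one_mul, sub_add_cancel]

-- Split off `E u⁻¹` on both sides of `E u` and use `E u⁻¹ * E u * E u⁻¹ = h (-u⁻¹)`.
lemma mul_unit_mul (H : CohnRelations E h) (x : R) (u : Rˣ) (y : R) :
    E x * E u * E y = h u⁻¹ * (E (u ^ 2 * x - u) * E (y - ↑u⁻¹)) := by
  have hu : E ↑u⁻¹ * E u * E ↑u⁻¹ = h (-u⁻¹) := by simpa using H.unit_mul_inv_mul u⁻¹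
  have split_x : E x = h (-1) * (E (x - ↑u⁻¹) * E 0 * E ↑u⁻¹) := H.split_left x _
  have split_y : E y = h (-1) * (E ↑u⁻¹ * E 0 * E (y - ↑u⁻¹)) := by
    rw [H.mul_zero_mul, ← mul_assoc, diag_neg_one_mul_self, one_mul, add_sub_cancel]
  have shift : (u : R) ^ 2 * (x - ↑u⁻¹) = u ^ 2 * x - u := by
    rw [mul_sub, pow_two, mul_assoc _ _ (↑u⁻¹ : R), Units.mul_inv, mul_one]
  have conj : E (x - ↑u⁻¹) * E 0 * h (-u⁻¹) = h (-u⁻¹) * E (u ^ 2 * x - u) * E 0 := by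
    rw [mul_assoc, H.mul_diag, mul_zero, ← mul_assoc, H.mul_diag]
    simp [shift]
  calc E x * E u * E y
      = h (-1) * h (-1) * (E (x - ↑u⁻¹) * E 0 * (E ↑u⁻¹ * E u * E ↑u⁻¹)) * E 0 *
          E (y - ↑u⁻¹) := by
        rw [split_x, split_y]
        simp only [mul_assoc, H.mul_diag_neg_one_mul]
    _ = h (-u⁻¹) * E (u ^ 2 * x - u) * (E 0 * E 0) * E (y - ↑u⁻¹) := by
        rw [diag_neg_one_mul_self, one_mul, hu, conj, mul_assoc _ (E 0) (E 0)]
    _ = h (-u⁻¹) * h (-1) * E (u ^ 2 * x - u) * E (y - ↑u⁻¹) := by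
        rw [H.zero_mul_zero, mul_assoc (h _), H.mul_diag_neg_one, ← mul_assoc]
    _ = h u⁻¹ * (E (u ^ 2 * x - u) * E (y - ↑u⁻¹)) := by
        rw [← _root_.map_mul, neg_mul_neg, mul_one, mul_assoc]

lemma mul_mul_unit_mul (H : CohnRelations E h) (x y : R) (u : Rˣ) (z : R) :
    E x * E y * E u * E z =
      h u * (E (↑u⁻¹ ^ 2 * x) * E (u ^ 2 * y - u) * E (z - ↑u⁻¹)) := by
  rw [mul_assoc (E x), mul_assoc (E x), H.mul_unit_mul, ← mul_assoc (E x), H.mul_diag, inv_inv]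
  simp only [mul_assoc]

/- If neither `y` nor `z` is congruent to a unit, split `E y = h (-1) * (E (y - 1) * E 0 * E 1)`.
Collapsing at the units `y - 1` and `1` turns `E z` into `E (z - 1)`, and `z - 1` is a unit. -/
lemma exists_four_eq_three (H : CohnRelations E h) {σ : R →+* L} (hσ : IsLocalUnitLifting σ)
    (hE : E.FactorsThrough σ) (w x y z : R) :
    ∃ u a b c, E w * E x * E y * E z = h u * (E a * E b * E c) := by
  obtain ⟨u, hu | hu⟩ := hσ x
  · rw [← hE hu, H.mul_unit_mul]
    exact ⟨u⁻¹, u ^ 2 * w - u, y - ↑u⁻¹, z, by simp only [mul_assoc]⟩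
  obtain ⟨v, hv | hv⟩ := hσ y
  · rw [← hE hv]
    exact ⟨v, _, _, _, H.mul_mul_unit_mul w x v z⟩
  have collapse_one : E (-↑u⁻¹) * E 1 * E y = E (-↑u⁻¹ - 1) * E v := by
    simpa [hE hv] using H.mul_unit_mul (-↑u⁻¹) 1 y
  have collapse_u : E w * E u * E 0 = h u⁻¹ * (E (u ^ 2 * w - u) * E (-↑u⁻¹)) := by
    rw [H.mul_unit_mul, zero_sub]
  refine ⟨-1 * u⁻¹ * v, ↑v⁻¹ ^ 2 * (u ^ 2 * w - u), v ^ 2 * (-↑u⁻¹ - 1) - v, z - ↑v⁻¹, ?_⟩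
  calc E w * E x * E y * E z
      = h (-1) * (E w * E u * E 0) * E 1 * E y * E z := by
        rw [H.split_left x 1, ← hE hu, ← mul_assoc (E w), H.mul_diag_neg_one]
        simp only [mul_assoc]
    _ = h (-1) * h u⁻¹ * E (u ^ 2 * w - u) * (E (-↑u⁻¹) * E 1 * E y) * E z := by
        rw [collapse_u]
        simp only [mul_assoc]
    _ = h (-1) * h u⁻¹ * (E (u ^ 2 * w - u) * E (-↑u⁻¹ - 1) * E v * E z) := by
        rw [collapse_one]
        simp only [mul_assoc]
    _ = h (-1 * u⁻¹ * v) * _ := by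
        rw [H.mul_mul_unit_mul, _root_.map_mul, _root_.map_mul, mul_assoc _ (h v)]

theorem exists_eq_diag_mul (H : CohnRelations E h) {σ : R →+* L} (hσ : IsLocalUnitLifting σ)
    (hE : E.FactorsThrough σ) {g : G} (hg : g ∈ Subgroup.closure (Set.range E)) :
    ∃ u x y z, g = h u * (E x * E y * E z) := by
  refine H.closure_induction ⟨-1, 1, 1, 1, ?_⟩ (fun t g ih => ?_) hg
  · simpa [diag_neg_one_mul_self] using (congrArg (h (-1) * ·) (H.unit_mul_inv_mul 1)).symm
  · obtain ⟨u, x, y, z, rfl⟩ := ih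
    obtain ⟨v, a, b, c, habc⟩ := H.exists_four_eq_three hσ hE (u ^ 2 * t) x y z
    refine ⟨u⁻¹ * v, a, b, c, ?_⟩
    rw [← mul_assoc (E t), H.mul_diag, mul_assoc, ← mul_assoc (E _), ← mul_assoc (E _), habc,
      _root_.map_mul, mul_assoc (h _) (h _)]

end CohnRelations

end CohnRelations

section SpecialLinear

open Matrix SpecialLinearGroup
open scoped MatrixGroups

variable {R S S' L Q : Type*} [CommRing R] [CommRing S] [CommRing S'] [CommRing L] [Group Q]

/-- Cohn's generators of the elementary group: `cohnE 0` is a rotation and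
`cohnE x * (cohnE 0)⁻¹` is the transvection with upper right entry `x`. -/
def cohnE (x : R) : SL(2, R) := ⟨!![x, -1; 1, 0], by simp⟩

/-- The torus of `SL₂`, parametrised by `u ↦ diag(u, u⁻¹)`. -/
def torus : Rˣ →* SL(2, R) where
  toFun u := ⟨!![(u : R), 0; 0, ↑u⁻¹], by simp⟩
  map_one' := Subtype.ext (by simp [Matrix.one_fin_two])
  map_mul' u v := Subtype.ext <|
    show _ = !![(u : R), 0; 0, ↑u⁻¹] * !![(v : R), 0; 0, ↑v⁻¹] by simp [mul_comm]

variable (R) in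
/-- The elementary group `E₂(R)`, generated by Cohn's matrices `cohnE x`. -/
abbrev E2 : Subgroup SL(2, R) := Subgroup.closure (Set.range cohnE)

lemma coe_cohnE (x : R) : (cohnE x : Matrix (Fin 2) (Fin 2) R) = !![x, -1; 1, 0] := rfl

lemma coe_torus (u : Rˣ) : (torus u : Matrix (Fin 2) (Fin 2) R) = !![(u : R), 0; 0, ↑u⁻¹] := rfl

lemma cohnRelations : CohnRelations (cohnE (R := R)) torus where
  mul_zero_mul x y := by
    ext i j; fin_cases i <;> fin_cases j <;> simp [coe_cohnE, coe_torus, add_comm]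
  unit_mul_inv_mul u := by
    ext i j; fin_cases i <;> fin_cases j <;> simp [coe_cohnE, coe_torus]
  mul_diag x u := by
    ext i j; fin_cases i <;> fin_cases j <;> simp [coe_cohnE, coe_torus, pow_two, mul_comm,
      mul_assoc]

lemma cohnE_mem_E2 (x : R) : cohnE x ∈ E2 R := Subgroup.subset_closure ⟨x, rfl⟩

lemma transvection_mem_E2 {i j : Fin 2} (hij : i ≠ j) (c : R) :
    SpecialLinearGroup.transvection hij c ∈ E2 R := by
  have zero_one : SpecialLinearGroup.transvection zero_ne_one c = cohnE c * (cohnE 0)⁻¹ := by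
    ext i j
    fin_cases i <;> fin_cases j <;>
      simp [coe_cohnE, SpecialLinearGroup.transvection, Matrix.transvection]
  have one_zero : SpecialLinearGroup.transvection one_ne_zero c = (cohnE 0)⁻¹ * cohnE (-c) := by
    ext i j
    fin_cases i <;> fin_cases j <;>
      simp [coe_cohnE, SpecialLinearGroup.transvection, Matrix.transvection]
  fin_cases i <;> fin_cases j
  · exact absurd rfl hij
  · exact zero_one ▸ mul_mem (cohnE_mem_E2 c) (inv_mem (cohnE_mem_E2 0))
  · exact one_zero ▸ mul_mem (inv_mem (cohnE_mem_E2 0)) (cohnE_mem_E2 (-c))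
  · exact absurd rfl hij

lemma coe_cohnE_mem_closure (x : R) :
    (cohnE x : Matrix (Fin 2) (Fin 2) R) ∈ Submonoid.closure (ElemMatrices 2 R) := by
  have factorization : (cohnE x : Matrix (Fin 2) (Fin 2) R) = Matrix.transvection 0 1 (x - 1) *
      Matrix.transvection 1 0 1 * Matrix.transvection 0 1 (-1) := by
    ext i j
    fin_cases i <;> fin_cases j <;>
      simp [coe_cohnE, Matrix.transvection, Matrix.mul_apply, neg_add_eq_sub]
  have mem {i j : Fin 2} (hij : i ≠ j) (c : R) :
      Matrix.transvection i j c ∈ Submonoid.closure (ElemMatrices 2 R) :=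
    Submonoid.subset_closure ⟨i, j, c, hij, rfl⟩
  rw [factorization]
  exact mul_mem (mul_mem (mem (by decide) _) (mem (by decide) _)) (mem (by decide) _)

theorem isGE_two_iff : IsGE R 2 ↔ E2 R = ⊤ := by
  refine ⟨fun hR => (Subgroup.eq_top_iff' _).2 fun g => ?_, fun hR A hA => ?_⟩
  · have closure_le :
        Submonoid.closure (ElemMatrices 2 R) ≤ (E2 R).toSubmonoid.map coeMonoidHom := by
      rw [Submonoid.closure_le]
      rintro _ ⟨i, j, c, hij, rfl⟩
      exact ⟨_, transvection_mem_E2 hij c, rfl⟩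
    obtain ⟨g', hg', hgg'⟩ := closure_le (hR g g.det_coe)
    exact coeMonoidHom_injective hgg' ▸ hg'
  · obtain ⟨A, rfl⟩ : ∃ g : SL(2, R), ↑g = A := ⟨⟨A, hA⟩, rfl⟩
    have hA : A ∈ E2 R := hR ▸ Subgroup.mem_top A
    exact cohnRelations.closure_induction (one_mem _)
      (fun x g ih => mul_mem (coe_cohnE_mem_closure x) ih) hA

lemma map_cohnE (f : R →+* S) (x : R) : SpecialLinearGroup.map f (cohnE x) = cohnE (f x) := by
  ext i j
  fin_cases i <;> fin_cases j <;> simp [coe_cohnE]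

lemma map_torus (f : R →+* S) (u : Rˣ) :
    SpecialLinearGroup.map f (torus u) = torus (Units.map f u) := by
  ext i j
  fin_cases i <;> fin_cases j <;> simp [coe_torus]

lemma map_E2 {f : R →+* S} (hf : Surjective f) :
    (E2 R).map (SpecialLinearGroup.map f) = E2 S := by
  rw [E2, MonoidHom.map_closure, ← Set.range_comp]
  have hcomp : SpecialLinearGroup.map f ∘ cohnE = cohnE ∘ f := funext (map_cohnE f)
  rw [hcomp, hf.range_comp, E2]

lemma map_eq_map_iff (f : R →+* S) (g g' : SL(2, R)) :
    SpecialLinearGroup.map f g = SpecialLinearGroup.map f g' ↔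
      ∀ i j, g i j - g' i j ∈ RingHom.ker f := by
  simp_rw [Matrix.SpecialLinearGroup.ext_iff, RingHom.sub_mem_ker_iff]
  rfl

-- `c ≠ 0` at the lower left corner is replaced by the remainder of a division by `c`.
theorem isGE_two_of_euclidean (N : R → ℕ) (hN : ∀ a c, c ≠ 0 → ∃ q, N (q * c - a) < N c) :
    IsGE R 2 := by
  rw [isGE_two_iff, Subgroup.eq_top_iff']
  intro g
  induction hn : N (g 1 0) using Nat.strong_induction_on generalizing g with
  | _ n ih =>
    by_cases hc : g 1 0 = 0
    · have hdet : g 0 0 * g 1 1 = 1 := by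
        simpa only [Matrix.det_fin_two, hc, mul_zero, sub_zero] using g.det_coe
      let u : Rˣ := ⟨g 0 0, g 1 1, hdet, by rw [mul_comm, hdet]⟩
      have hg : g = torus u * (cohnE (g 1 1 * g 0 1) * (cohnE 0)⁻¹) := by
        ext i j
        fin_cases i <;> fin_cases j <;>
          simp [coe_torus, coe_cohnE, u, hc, ← mul_assoc, hdet]
      rw [hg]
      exact mul_mem (cohnRelations.diag_mem_closure u)
        (mul_mem (cohnE_mem_E2 _) (inv_mem (cohnE_mem_E2 0)))
    · obtain ⟨q, hq⟩ := hN (g 0 0) (g 1 0) hc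
      have hcorner : ((cohnE q)⁻¹ * g) 1 0 = q * g 1 0 - g 0 0 := by
        simp [coe_cohnE, Matrix.adjugate_fin_two, Matrix.mul_apply, neg_add_eq_sub]
      refine ((E2 R).mul_mem_cancel_left (inv_mem (cohnE_mem_E2 q))).1 (ih _ ?_ _ rfl)
      rwa [hcorner, ← hn]

lemma torus_mul_three_eq_one {u : Rˣ} {x y z : R}
    (h1 : torus u * (cohnE x * cohnE y * cohnE z) = 1) :
    x = -↑u⁻¹ ∧ y = -u ∧ z = -↑u⁻¹ := by
  have hxy (i j) : (torus u * (cohnE x * cohnE y)) i j = (cohnE z)⁻¹ i j := by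
    rw [eq_inv_of_mul_eq_one_left ((mul_assoc _ _ _).trans h1)]
  have h01 : ↑u * -x = 1 := by
    simpa [coe_torus, coe_cohnE, Matrix.adjugate_fin_two, Matrix.mul_apply] using hxy 0 1
  have h10 : ↑u⁻¹ * y = -1 := by
    simpa [coe_torus, coe_cohnE, Matrix.adjugate_fin_two, Matrix.mul_apply] using hxy 1 0
  have h11 : -↑u⁻¹ = z := by
    simpa [coe_torus, coe_cohnE, Matrix.adjugate_fin_two, Matrix.mul_apply] using hxy 1 1
  refine ⟨?_, ?_, h11.symm⟩
  · rw [← neg_eq_iff_eq_neg, eq_comm]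
    exact Units.inv_eq_of_mul_eq_one_right h01
  · rw [Units.inv_mul_eq_iff_eq_mul] at h10
    simpa using h10

/- The pair of `π` and reduction along `σ` satisfies Cohn's relations and factors through `σ`. The
resulting normal form of `g` is determined by its image in `SL₂(L)`. -/
theorem map_eq_one_of_isLocalUnitLifting {σ : R →+* L} (hσ : IsLocalUnitLifting σ)
    {π : E2 R →* Q} (hπ : FactorsThrough (π ∘ toClosure cohnE) σ)
    {g : E2 R} (hg : SpecialLinearGroup.map σ (g : SL(2, R)) = 1) : π g = 1 := by
  let F : E2 R →* Q × SL(2, L) := π.prod ((SpecialLinearGroup.map σ).comp (E2 R).subtype)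
  have hF : FactorsThrough (F ∘ toClosure cohnE) σ := fun x y hxy =>
    Prod.ext (hπ hxy) <| by
      simp only [F, Function.comp_apply, MonoidHom.prod_apply, MonoidHom.comp_apply,
        Subgroup.subtype_apply, toClosure, map_cohnE, hxy]
  have hFg : F g ∈ Subgroup.closure (Set.range (F ∘ toClosure cohnE)) := by
    rw [Set.range_comp, ← MonoidHom.map_closure, closure_range_toClosure]
    exact Subgroup.mem_map_of_mem F (Subgroup.mem_top g)
  have H := cohnRelations (R := R).toClosure
  obtain ⟨u, x, y, z, hnf⟩ := (H.map F).exists_eq_diag_mul hσ hF hFg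
  have hL : torus (Units.map σ u) * (cohnE (σ x) * cohnE (σ y) * cohnE (σ z)) = 1 := by
    rw [← hg, ← map_torus]
    simpa [F, toClosure, map_cohnE] using (congrArg Prod.snd hnf).symm
  obtain ⟨hx, hy, hz⟩ := torus_mul_three_eq_one hL
  have hx' : σ x = σ (-↑u⁻¹) := by simpa using hx
  have hy' : σ y = σ (-u) := by simpa using hy
  have hz' : σ z = σ (-↑u⁻¹) := by simpa using hz
  calc π g = π (_ : E2 R) * (π (toClosure cohnE x) * π (toClosure cohnE y) *
        π (toClosure cohnE z)) := congrArg Prod.fst hnf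
    _ = 1 := by
      rw [show π _ = _ from hπ hx', show π _ = _ from hπ hy', show π _ = _ from hπ hz']
      exact (H.map π).diag_mul_eq_one u

/-- The normal subgroup of those elements of `E₂(R)` that become trivial in `SL₂(S)`. -/
def E2ker (f : R →+* S) : Subgroup (E2 R) :=
  ((SpecialLinearGroup.map f).comp (E2 R).subtype).ker

instance (f : R →+* S) : (E2ker f).Normal := MonoidHom.normal_ker _

lemma mem_E2ker {f : R →+* S} {g : E2 R} :
    g ∈ E2ker f ↔ SpecialLinearGroup.map f (g : SL(2, R)) = 1 := Iff.rfl

lemma toClosure_inv_mul_mem_E2ker {f : R →+* S} {x y : R} (hxy : f x = f y) :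
    (toClosure cohnE x)⁻¹ * toClosure cohnE y ∈ E2ker f := by
  rw [mem_E2ker]
  simp [toClosure, map_cohnE, hxy]

lemma E2ker_le_sup {f : R →+* S} {f' : R →+* S'} {σ : R →+* L}
    (hker : RingHom.ker σ = RingHom.ker f ⊔ RingHom.ker f') (hσ : IsLocalUnitLifting σ) :
    E2ker σ ≤ E2ker f ⊔ E2ker f' := by
  intro g hg
  rw [← QuotientGroup.eq_one_iff]
  refine map_eq_one_of_isLocalUnitLifting (π := QuotientGroup.mk' _) hσ (fun x y hxy => ?_) hg
  obtain ⟨i, hi, j, hj, hij⟩ := Submodule.mem_sup.1 (hker ▸ RingHom.sub_mem_ker_iff σ |>.2 hxy)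
  have hfx : f x = f (y + j) := by
    rw [← RingHom.sub_mem_ker_iff]
    convert hi using 1
    linear_combination -hij
  have hfy : f' (y + j) = f' y := by
    rw [← RingHom.sub_mem_ker_iff]
    convert hj using 1
    ring
  refine (QuotientGroup.eq.2 ?_ : (_ : E2 R ⧸ (E2ker f ⊔ E2ker f')) = _)
  rw [← mul_inv_cancel_left (toClosure cohnE (y + j)) (toClosure cohnE y), ← mul_assoc]
  exact mul_mem (Subgroup.mem_sup_left (toClosure_inv_mul_mem_E2ker hfx))
    (Subgroup.mem_sup_right (toClosure_inv_mul_mem_E2ker hfy))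

lemma map_eq_map_of_ker_le {f : R →+* S} {σ : R →+* L} (hle : RingHom.ker f ≤ RingHom.ker σ)
    {g g' : SL(2, R)} (h : SpecialLinearGroup.map f g = SpecialLinearGroup.map f g') :
    SpecialLinearGroup.map σ g = SpecialLinearGroup.map σ g' :=
  (map_eq_map_iff σ g g').2 fun i j => hle ((map_eq_map_iff f g g').1 h i j)

lemma exists_E2_map_eq {f : R →+* S} (hf : Surjective f) (hS : IsGE S 2) (g : SL(2, R)) :
    ∃ k : E2 R, SpecialLinearGroup.map f (k : SL(2, R)) = SpecialLinearGroup.map f g := by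
  have hg : SpecialLinearGroup.map f g ∈ (E2 R).map (SpecialLinearGroup.map f) := by
    rw [map_E2 hf, isGE_two_iff.1 hS]
    exact Subgroup.mem_top _
  obtain ⟨k, hk, hkg⟩ := hg
  exact ⟨⟨k, hk⟩, hkg⟩

theorem isGE_two_of_patching {f : R →+* S} {f' : R →+* S'} {σ : R →+* L} (hf : Surjective f)
    (hf' : Surjective f') (hinf : RingHom.ker f ⊓ RingHom.ker f' = ⊥)
    (hker : RingHom.ker σ = RingHom.ker f ⊔ RingHom.ker f') (hσ : IsLocalUnitLifting σ)
    (hS : IsGE S 2) (hS' : IsGE S' 2) : IsGE R 2 := by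
  rw [isGE_two_iff, Subgroup.eq_top_iff']
  intro g
  obtain ⟨k, hk⟩ := exists_E2_map_eq hf hS g
  obtain ⟨k', hk'⟩ := exists_E2_map_eq hf' hS' g
  have hkk' : k * k'⁻¹ ∈ E2ker σ := by
    rw [mem_E2ker, Subgroup.coe_mul, Subgroup.coe_inv, map_mul, map_inv,
      map_eq_map_of_ker_le (hker ▸ le_sup_left) hk, map_eq_map_of_ker_le (hker ▸ le_sup_right) hk',
      mul_inv_cancel]
  obtain ⟨q, hq, q', hq', hqq'⟩ :=
    Subgroup.mem_sup_of_normal_left.1 (E2ker_le_sup hker hσ hkk')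
  have hcomm : q⁻¹ * k = q' * k' := by
    rw [inv_mul_eq_iff_eq_mul, ← mul_assoc, hqq', inv_mul_cancel_right]
  have hf_eq : SpecialLinearGroup.map f ↑(q⁻¹ * k) = SpecialLinearGroup.map f g := by
    rw [Subgroup.coe_mul, map_mul, hk, mem_E2ker.1 (inv_mem hq), one_mul]
  have hf'_eq : SpecialLinearGroup.map f' ↑(q⁻¹ * k) = SpecialLinearGroup.map f' g := by
    rw [hcomm, Subgroup.coe_mul, map_mul, hk', mem_E2ker.1 hq', one_mul]
  have hg : ↑(q⁻¹ * k) = g := by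
    ext i j
    have hij := Ideal.mem_inf.2
      ⟨(map_eq_map_iff f _ g).1 hf_eq i j, (map_eq_map_iff f' _ g).1 hf'_eq i j⟩
    rwa [hinf, Ideal.mem_bot, sub_eq_zero] at hij
  exact hg ▸ (q⁻¹ * k).2

theorem isGE_two_quotient {P : Type*} [CommRing P] {I : Ideal P} {f : P →+* S} {f' : P →+* S'}
    (hf : Surjective f) (hf' : Surjective f') (hI : I = RingHom.ker f ⊓ RingHom.ker f')
    (hσ : IsLocalUnitLifting (Ideal.Quotient.factor
      (hI.le.trans inf_le_sup : I ≤ RingHom.ker f ⊔ RingHom.ker f')))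
    (hS : IsGE S 2) (hS' : IsGE S' 2) : IsGE (P ⧸ I) 2 := by
  have hle : I ≤ RingHom.ker f := hI.le.trans inf_le_left
  have hle' : I ≤ RingHom.ker f' := hI.le.trans inf_le_right
  refine isGE_two_of_patching (f := Ideal.Quotient.lift I f hle)
    (f' := Ideal.Quotient.lift I f' hle') (Ideal.Quotient.lift_surjective_of_surjective I hle hf)
    (Ideal.Quotient.lift_surjective_of_surjective I hle' hf') ?_ ?_ hσ hS hS'
  · refine eq_bot_iff.2 fun y hy => ?_
    obtain ⟨p, rfl⟩ := Ideal.Quotient.mk_surjective y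
    exact Ideal.Quotient.eq_zero_iff_mem.2 (hI ▸ hy)
  · rw [Ideal.Quotient.factor_ker, Ideal.ker_quotient_lift, Ideal.ker_quotient_lift, Ideal.map_sup]

end SpecialLinear

section Euclidean

theorem isGE_two_of_discretely_normed {S : Type*} [CommRing S] {φ : S →+* ℂ} (hφ : Injective φ)
    (hnorm : ∀ s, ∃ n : ℕ, Complex.normSq (φ s) = n)
    (hcover : ∀ z, ∃ q, Complex.normSq (z - φ q) < 1) : IsGE S 2 := by
  choose N hN using hnorm
  refine isGE_two_of_euclidean N fun a c hc => ?_
  have hφc : φ c ≠ 0 := (map_ne_zero_iff φ hφ).2 hc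
  obtain ⟨q, hq⟩ := hcover (φ a / φ c)
  refine ⟨q, ?_⟩
  have hfactor : φ (q * c - a) = -(φ a / φ c - φ q) * φ c := by
    rw [map_sub, map_mul]
    field_simp
    ring
  rw [← Nat.cast_lt (α := ℝ), ← hN, ← hN, hfactor, Complex.normSq_mul, Complex.normSq_neg]
  exact mul_lt_of_lt_one_left (Complex.normSq_pos.2 hφc) hq

variable {ω : ℂ} {b : ℤ}

lemma im_ne_zero_of_sq_eq (hb : |b| ≤ 1) (hω : ω ^ 2 = b * ω - 1) : ω.im ≠ 0 := by
  intro him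
  have hre : ω.re ^ 2 = b * ω.re - 1 := by
    simpa [pow_two, him] using congrArg Complex.re hω
  have hbR : (b : ℝ) ^ 2 ≤ 1 := by exact_mod_cast (sq_le_one_iff_abs_le_one b).2 hb
  nlinarith [sq_nonneg (2 * ω.re - b)]

lemma normSq_add_mul (hb : |b| ≤ 1) (hω : ω ^ 2 = b * ω - 1) (s t : ℝ) :
    Complex.normSq (s + t * ω) = s ^ 2 + b * s * t + t ^ 2 := by
  have him : 2 * ω.re = b := by
    refine mul_right_cancel₀ (im_ne_zero_of_sq_eq hb hω) ?_
    have him_eq : ω.re * ω.im + ω.im * ω.re = b * ω.im := by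
      simpa [pow_two] using congrArg Complex.im hω
    linarith
  have hre : ω.re ^ 2 - ω.im ^ 2 = b * ω.re - 1 := by
    simpa [pow_two] using congrArg Complex.re hω
  rw [← him] at hre ⊢
  simp only [Complex.normSq_apply, Complex.add_re, Complex.add_im, Complex.re_ofReal_mul,
    Complex.im_ofReal_mul, Complex.ofReal_re, Complex.ofReal_im]
  linear_combination -t ^ 2 * hre

lemma exists_normSq_sub_lt_one (hb : |b| ≤ 1) (hω : ω ^ 2 = b * ω - 1) (z : ℂ) :
    ∃ m n : ℤ, Complex.normSq (z - (m + n * ω)) < 1 := by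
  have him := im_ne_zero_of_sq_eq hb hω
  let t := z.im / ω.im
  let s := z.re - t * ω.re
  have hz : z = s + t * ω := by
    apply Complex.ext <;> simp [s, t, him]
  refine ⟨round s, round t, ?_⟩
  have hrw : z - (round s + round t * ω) = ↑(s - round s) + ↑(t - round t) * ω := by
    rw [hz]
    push_cast
    ring
  rw [hrw, normSq_add_mul hb hω]
  have hbR : |(b : ℝ)| ≤ 1 := by exact_mod_cast hb
  have hs := abs_sub_round s
  have ht := abs_sub_round t
  calc (s - round s) ^ 2 + b * (s - round s) * (t - round t) + (t - round t) ^ 2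
      ≤ |s - round s| ^ 2 + |↑b| * |s - round s| * |t - round t| + |t - round t| ^ 2 := by
        rw [sq_abs, sq_abs, ← abs_mul, ← abs_mul]
        gcongr
        exact le_abs_self _
    _ ≤ (1 / 2) ^ 2 + 1 * (1 / 2) * (1 / 2) + (1 / 2) ^ 2 := by gcongr
    _ < 1 := by norm_num

end Euclidean

section Units

variable {R L : Type*} [CommRing R] [CommRing L]

lemma coe_zpow_of_sub_one_sq_eq_zero {x : Lˣ} (hx : (x - 1 : L) ^ 2 = 0) (n : ℤ) :
    (↑(x ^ n) : L) = 1 + n * (x - 1) := by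
  have hinv : (↑x⁻¹ : L) = 2 - x := Units.inv_eq_of_mul_eq_one_right (by linear_combination -hx)
  induction n with
  | zero => simp
  | succ n ih =>
    rw [zpow_add_one, Units.val_mul, ih]
    push_cast
    linear_combination n * hx
  | pred n ih =>
    rw [zpow_sub_one, Units.val_mul, ih, hinv]
    push_cast
    linear_combination n * hx

lemma exists_unit_map_eq {σ : R →+* L} {u : Rˣ} {b : ℤ} (hb : |b| ≤ 1)
    (hu : σ u ^ 2 = b * σ u - 1) (hu1 : (σ u - 1) ^ 2 = 0) (m n : ℤ) :
    ∃ v : Rˣ, σ v = m + n * σ u ∨ σ v = m + n * σ u - 1 := by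
  have hchar : (2 - b : L) = 0 := by
    have h0 : (2 - b) * σ u = 0 := by linear_combination hu - hu1
    exact (u.isUnit.map σ).mul_left_eq_zero.1 h0
  have hpow (k : ℤ) : σ ↑(u ^ k) = 1 + k * (σ u - 1) := by
    rw [← MonoidHom.coe_coe σ, ← Units.coe_map, map_zpow, coe_zpow_of_sub_one_sq_eq_zero hu1]
    rfl
  have hmod : ((m + n : ℤ) : L) = 1 ∨ ((m + n : ℤ) : L) = -1 ∨ ((m + n : ℤ) : L) = 0 := by
    obtain ⟨q, hq | hq | hq⟩ : ∃ q : ℤ, m + n = (2 - b) * q + 1 ∨ m + n = (2 - b) * q - 1 ∨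
        m + n = (2 - b) * q :=
      ⟨(m + n + 1) / (2 - b), by rcases Int.abs_le_one_iff.1 hb with rfl | rfl | rfl <;> omega⟩
    all_goals
      rw [hq]
      push_cast
      rw [hchar]
      simp
  push_cast at hmod
  rcases hmod with h1 | h1 | h0
  · exact ⟨u ^ n, Or.inl (by rw [hpow]; linear_combination -h1)⟩
  · refine ⟨-u ^ (-n), Or.inl ?_⟩
    rw [Units.val_neg, map_neg, hpow]
    push_cast
    linear_combination -h1
  · refine ⟨-u ^ (-n), Or.inr ?_⟩
    rw [Units.val_neg, map_neg, hpow]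
    push_cast
    linear_combination -h0

end Units

section Cyclotomic

open Polynomial

lemma cyclotomic_eq_quadratic {e : ℕ} (he : e ∈ ({3, 4, 6} : Finset ℕ)) :
    ∃ b : ℤ, |b| ≤ 1 ∧ cyclotomic e ℤ = X ^ 2 - C b * X + 1 := by
  simp only [Finset.mem_insert, Finset.mem_singleton] at he
  rcases he with rfl | rfl | rfl
  · exact ⟨-1, by simp, by rw [cyclotomic_three]; simp⟩
  · refine ⟨0, by simp, ?_⟩
    have cyclotomic_four : cyclotomic 4 ℤ = 1 + X ^ 2 := by
      simpa [Finset.sum_range_succ] using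
        cyclotomic_prime_pow_eq_geom_sum (R := ℤ) (n := 1) Nat.prime_two
    rw [cyclotomic_four]
    simp [add_comm]
  · exact ⟨1, by simp, by rw [cyclotomic_six]; simp⟩

lemma totient_eq_two {e : ℕ} (he : e ∈ ({3, 4, 6} : Finset ℕ)) : e.totient = 2 := by
  revert e
  decide

lemma exists_dvd_sub_linear {R : Type*} [CommRing R] {q : R[X]} (hq : q.Monic)
    (hdeg : q.natDegree = 2) (p : R[X]) : ∃ m n : R, q ∣ p - (C m + C n * X) := by
  have hlin : (p %ₘ q).natDegree ≤ 1 := by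
    have hlt := natDegree_modByMonic_lt p hq (by rintro rfl; simp at hdeg)
    rwa [hdeg, Nat.lt_succ_iff] at hlt
  refine ⟨(p %ₘ q).coeff 0, (p %ₘ q).coeff 1, p /ₘ q, ?_⟩
  rw [add_comm (C _), ← eq_X_add_C_of_natDegree_le_one hlin, sub_eq_iff_eq_add', modByMonic_add_div]

lemma exists_cyclotomic_dvd_sub_linear {e : ℕ} (he : e.totient = 2) (p : ℤ[X]) :
    ∃ m n : ℤ, cyclotomic e ℤ ∣ p - (C m + C n * X) :=
  exists_dvd_sub_linear (cyclotomic.monic e ℤ) ((natDegree_cyclotomic e ℤ).trans he) p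

lemma aeval_zetaEl_surjective (e : ℕ) :
    Surjective (aeval (zetaEl e) : ℤ[X] →ₐ[ℤ] Zzeta e) := by
  rintro ⟨z, hz⟩
  obtain ⟨p, rfl⟩ := (Algebra.adjoin_singleton_eq_range_aeval ℤ (zeta e)).le hz
  exact ⟨p, Subtype.ext (aeval_subalgebra_coe p _ (zetaEl e))⟩

lemma ker_aeval_zetaEl {e : ℕ} (he : 0 < e) :
    RingHom.ker (aeval (zetaEl e) : ℤ[X] →ₐ[ℤ] Zzeta e) = Ideal.span {cyclotomic e ℤ} := by
  have hprim : IsPrimitiveRoot (zeta e) e := Complex.isPrimitiveRoot_exp e he.ne'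
  ext p
  rw [Ideal.mem_span_singleton, cyclotomic_eq_minpoly hprim he,
    ← minpoly.isIntegrallyClosed_dvd_iff (hprim.isIntegral he), RingHom.mem_ker,
    ← ZeroMemClass.coe_eq_zero]
  exact (aeval_subalgebra_coe p _ (zetaEl e)).congr_left

lemma exists_eq_add_mul_zetaEl {e : ℕ} (he : e.totient = 2) (s : Zzeta e) :
    ∃ m n : ℤ, s = m + n * zetaEl e := by
  have hpos : 0 < e := Nat.totient_pos.1 (he.symm ▸ two_pos)
  obtain ⟨p, rfl⟩ := aeval_zetaEl_surjective e s
  obtain ⟨m, n, hmn⟩ := exists_cyclotomic_dvd_sub_linear he p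
  rw [← Ideal.mem_span_singleton, ← ker_aeval_zetaEl hpos, RingHom.sub_mem_ker_iff] at hmn
  exact ⟨m, n, by simpa using hmn⟩

lemma zeta_sq_eq {e : ℕ} {b : ℤ} (he : 0 < e) (hb : cyclotomic e ℤ = X ^ 2 - C b * X + 1) :
    zeta e ^ 2 = b * zeta e - 1 := by
  have hroot : aeval (zetaEl e) (cyclotomic e ℤ) = 0 := by
    rw [← RingHom.mem_ker, ker_aeval_zetaEl he]
    exact Ideal.mem_span_singleton_self _
  have hroot' : zeta e ^ 2 - b * zeta e + 1 = 0 := by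
    simpa [hb, zetaEl] using congrArg Subtype.val hroot
  linear_combination hroot'

theorem isGE_two_Zzeta {e : ℕ} (he : e ∈ ({3, 4, 6} : Finset ℕ)) : IsGE (Zzeta e) 2 := by
  obtain ⟨b, hb, hcyc⟩ := cyclotomic_eq_quadratic he
  have htot := totient_eq_two he
  have hpos : 0 < e := Nat.totient_pos.1 (htot.symm ▸ two_pos)
  have hω := zeta_sq_eq hpos hcyc
  refine isGE_two_of_discretely_normed (φ := (Zzeta e).val.toRingHom) Subtype.val_injective
    (fun s => ?_) (fun z => ?_)
  · obtain ⟨m, n, rfl⟩ := exists_eq_add_mul_zetaEl htot s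
    have hN : Complex.normSq (m + n * zeta e) = ↑(m ^ 2 + b * m * n + n ^ 2) := by
      simpa using normSq_add_mul hb hω m n
    have hN_nonneg : 0 ≤ m ^ 2 + b * m * n + n ^ 2 := by
      exact_mod_cast hN ▸ Complex.normSq_nonneg _
    lift m ^ 2 + b * m * n + n ^ 2 to ℕ using hN_nonneg with N
    exact ⟨N, by simpa [zetaEl] using hN⟩
  · obtain ⟨m, n, hmn⟩ := exists_normSq_sub_lt_one hb hω z
    exact ⟨m + n * zetaEl e, by simpa [zetaEl] using hmn⟩

/-- The kernel `⋂_{d ∈ D} (Φ_d)` of `λ_D`, so that `O(D) = ℤ[X] ⧸ cyclotomicIdeal D`. -/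
noncomputable abbrev cyclotomicIdeal (D : Finset ℕ) : Ideal ℤ[X] :=
  ⨅ d ∈ D, Ideal.span {cyclotomic d ℤ}

lemma cyclotomicIdeal_eq_inf {D : Finset ℕ} {e : ℕ} (he : e ∈ D) :
    cyclotomicIdeal D = Ideal.span {cyclotomic e ℤ} ⊓ cyclotomicIdeal (D.erase e) := by
  classical
  conv_lhs => rw [← Finset.insert_erase he, cyclotomicIdeal, Finset.iInf_insert]

lemma isUnit_mk_X {D : Finset ℕ} (hpos : ∀ d ∈ D, 0 < d) :
    IsUnit (Ideal.Quotient.mk (cyclotomicIdeal D) X) := by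
  have hn : ∏ d ∈ D, d ≠ 0 := Finset.prod_ne_zero_iff.2 fun d hd => (hpos d hd).ne'
  refine IsUnit.of_pow_eq_one ?_ hn
  rw [← map_pow, ← map_one (Ideal.Quotient.mk _), Ideal.Quotient.eq]
  simp only [Ideal.mem_iInf, Ideal.mem_span_singleton]
  intro d hd
  exact (cyclotomic.dvd_X_pow_sub_one d ℤ).trans
    (dvd_pow_sub_one_of_dvd (Finset.dvd_prod_of_mem _ hd))

lemma mem_sup_of_eta_dvd {D : Finset ℕ} {e : ℕ} (he : 0 < e) {p : ℤ[X]}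
    (hp : eta D e ∣ aeval (zetaEl e) p) :
    p ∈ Ideal.span {cyclotomic e ℤ} ⊔ cyclotomicIdeal (D.erase e) := by
  obtain ⟨g, hg⟩ := hp
  obtain ⟨q, rfl⟩ := aeval_zetaEl_surjective e g
  have hprod : (∏ d ∈ D.erase e, cyclotomic d ℤ) * q ∈ cyclotomicIdeal (D.erase e) := by
    simp only [Ideal.mem_iInf, Ideal.mem_span_singleton]
    exact fun d hd => (Finset.dvd_prod_of_mem _ hd).mul_right q
  refine Submodule.mem_sup.2 ⟨_, ?_, _, hprod, sub_add_cancel p _⟩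
  rw [← ker_aeval_zetaEl he, RingHom.sub_mem_ker_iff, map_mul, map_prod]
  exact hg

-- As `η_e` divides `(1 - ζ_e) ^ 2`, the image of `X` modulo `J` is a unipotent unit.
theorem isLocalUnitLifting_factor {D : Finset ℕ} (hpos : ∀ d ∈ D, 0 < d) {e : ℕ}
    (he : e ∈ ({3, 4, 6} : Finset ℕ)) (heta : eta D e ∣ (1 - zetaEl e) ^ 2) {J : Ideal ℤ[X]}
    (hJ : Ideal.span {cyclotomic e ℤ} ⊔ cyclotomicIdeal (D.erase e) = J)
    (hle : cyclotomicIdeal D ≤ J) : IsLocalUnitLifting (Ideal.Quotient.factor hle) := by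
  obtain ⟨b, hb, hcyc⟩ := cyclotomic_eq_quadratic he
  have htot := totient_eq_two he
  obtain ⟨u, hu⟩ := isUnit_mk_X hpos
  have hσu : Ideal.Quotient.factor hle u = Ideal.Quotient.mk J X := by
    rw [hu, Ideal.Quotient.factor_mk]
  have hJ_mem {q : ℤ[X]} (hq : cyclotomic e ℤ ∣ q) : q ∈ J :=
    hJ.le (Ideal.mem_sup_left (Ideal.mem_span_singleton.2 hq))
  have hroot : Ideal.Quotient.mk J (X ^ 2 - C b * X + 1) = 0 :=
    Ideal.Quotient.eq_zero_iff_mem.2 (hcyc ▸ hJ_mem dvd_rfl)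
  have hunipotent : Ideal.Quotient.mk J ((1 - X) ^ 2) = 0 :=
    Ideal.Quotient.eq_zero_iff_mem.2 <| hJ.le <|
      mem_sup_of_eta_dvd (Nat.totient_pos.1 (htot.symm ▸ two_pos)) (by simpa using heta)
  intro r
  obtain ⟨p, rfl⟩ := Ideal.Quotient.mk_surjective r
  obtain ⟨m, n, hmn⟩ := exists_cyclotomic_dvd_sub_linear htot p
  have hp : Ideal.Quotient.mk J p = Ideal.Quotient.mk J (C m + C n * X) :=
    Ideal.Quotient.eq.2 (hJ_mem hmn)
  simp only [map_add, map_sub, map_mul, map_pow, map_one, eq_intCast, map_intCast]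
    at hroot hunipotent hp
  obtain ⟨v, hv⟩ := exists_unit_map_eq hb (σ := Ideal.Quotient.factor hle) (u := u)
    (by rw [hσu]; linear_combination hroot) (by rw [hσu]; linear_combination hunipotent) m n
  refine ⟨v, ?_⟩
  rwa [map_sub, map_one, Ideal.Quotient.factor_mk, hp, ← hσu]

end Cyclotomic

end GE2

open GE2 in
theorem stmt_12_general (D : Finset ℕ) (hpos : ∀ d ∈ D, 0 < d) (e : ℕ) (he : e ∈ D)
    (heS : e ∈ ({3, 4, 6} : Finset ℕ)) (heta : eta D e ∣ (1 - zetaEl e) ^ 2)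
    (hGE : IsGE (Polynomial ℤ ⧸
      (⨅ d ∈ D.erase e, Ideal.span {Polynomial.cyclotomic d ℤ})) 2) :
    IsGE (Polynomial ℤ ⧸ (⨅ d ∈ D, Ideal.span {Polynomial.cyclotomic d ℤ})) 2 := by
  have hker : RingHom.ker (Polynomial.aeval (zetaEl e)).toRingHom =
      Ideal.span {Polynomial.cyclotomic e ℤ} := ker_aeval_zetaEl (hpos e he)
  have hker' : RingHom.ker (Ideal.Quotient.mk (cyclotomicIdeal (D.erase e))) =
      cyclotomicIdeal (D.erase e) := Ideal.mk_ker
  have hI : cyclotomicIdeal D = RingHom.ker (Polynomial.aeval (zetaEl e)).toRingHom ⊓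
      RingHom.ker (Ideal.Quotient.mk (cyclotomicIdeal (D.erase e))) := by
    rw [hker, hker', cyclotomicIdeal_eq_inf he]
  refine isGE_two_quotient (aeval_zetaEl_surjective e) Ideal.Quotient.mk_surjective hI ?_
    (isGE_two_Zzeta heS) hGE
  exact isLocalUnitLifting_factor hpos heS heta (by rw [hker, hker']) _

/-- If `e ∈ D ∩ {3,4,6}`, `η_e ℤ[ζ_e] = (1 - ζ_e)^k ℤ[ζ_e]` for some
`k ∈ {1,2}`, and `O(D \ {e})` is a `GE_2`-ring, then `O(D)` is a `GE_2`-ring. -/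
theorem stmt_12 (D : Finset ℕ) (hpos : ∀ d ∈ D, 0 < d) (hcard : 2 ≤ D.card)
    (e : ℕ) (he : e ∈ D) (heS : e ∈ ({3, 4, 6} : Finset ℕ))
    (heta : ∃ k ∈ ({1, 2} : Finset ℕ),
      Ideal.span {eta D e} = Ideal.span {(1 - zetaEl e) ^ k})
    (hGE : IsGE (Polynomial ℤ ⧸
      (⨅ d ∈ D.erase e, Ideal.span {Polynomial.cyclotomic d ℤ})) 2) :
    IsGE (Polynomial ℤ ⧸ (⨅ d ∈ D, Ideal.span {Polynomial.cyclotomic d ℤ})) 2 := by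
  obtain ⟨k, hk, hspan⟩ := heta
  exact stmt_12_general D hpos e he heS ((Ideal.span_singleton_le_span_singleton.1 hspan.ge).trans
    (pow_dvd_pow _ (Finset.le_max' _ _ hk))) hGE
end

section
/- Every finite commutative ring with identity is a generalized Euclidean ring: SL_n(R) = E_n(R) for all n ≥ 2. -/
open Matrix

/-- Stable rank one for a commutative ring: a coprime pair `a`, `b` can be shortened to a unit
`a + t * b`. It is the case `m = 1` of Bass's stable range condition on unimodular rows of
length `m + 1`. -/
def HasStableRankOne (R : Type*) [CommRing R] : Prop :=
  ∀ ⦃a b : R⦄, IsCoprime a b → ∃ t, IsUnit (a + t * b)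

theorem HasStableRankOne.of_finite_maximalSpectrum (R : Type*) [CommRing R]
    [Finite (MaximalSpectrum R)] : HasStableRankOne R := by
  classical
  rintro a b ⟨r, s, hrs⟩
  have hcoprime : Pairwise fun M N : MaximalSpectrum R ↦ IsCoprime M.asIdeal N.asIdeal :=
    fun _ _ hne ↦ Ideal.isCoprime_of_isMaximal (MaximalSpectrum.ext_iff.ne.mp hne)
  obtain ⟨t, ht⟩ := Ideal.exists_forall_sub_mem_ideal hcoprime
    fun M ↦ if a ∈ M.asIdeal then 1 else 0
  refine ⟨t, not_not.mp fun hnonunit ↦ ?_⟩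
  obtain ⟨M, hM, hmem⟩ := exists_max_ideal_of_mem_nonunits hnonunit
  have htM := ht ⟨M, hM⟩
  by_cases ha : a ∈ M
  · rw [if_pos ha] at htM
    have hone : (1 : R) = s * (a + t * b) - s * b * (t - 1) + (r - s) * a := by
      linear_combination -hrs
    refine (Ideal.ne_top_iff_one M).mp hM.ne_top (hone ▸ ?_)
    exact add_mem (sub_mem (M.mul_mem_left _ hmem) (M.mul_mem_left _ htM)) (M.mul_mem_left _ ha)
  · rw [if_neg ha, sub_zero] at htM
    exact ha ((add_mem_cancel_right (M.mul_mem_right b htM)).mp hmem)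

/-- The group `E_n(R)`, encoded as a submonoid of the matrix ring; it is closed under inverses by
`elementarySubmonoid.exists_mul_eq_one`. -/
abbrev elementarySubmonoid (n : ℕ) (R : Type*) [CommRing R] :
    Submonoid (Matrix (Fin n) (Fin n) R) :=
  Submonoid.closure (ElemMatrices n R)

section

variable {R : Type*} [CommRing R] {n : ℕ}

theorem transvection_eq_one_add_vecMulVec {ι : Type*} [DecidableEq ι] (i j : ι) (c : R) :
    transvection i j c = 1 + vecMulVec (Pi.single i c) (Pi.single j 1) := by
  ext k l
  simp [transvection, single_apply, vecMulVec_apply, Pi.single_apply, ← ite_and, and_comm, eq_comm]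

namespace elementarySubmonoid

theorem transvection_mem {i j : Fin n} (hij : i ≠ j) (c : R) :
    transvection i j c ∈ elementarySubmonoid n R :=
  Submonoid.subset_closure ⟨i, j, c, hij, rfl⟩

theorem det_eq_one {T : Matrix (Fin n) (Fin n) R} (hT : T ∈ elementarySubmonoid n R) :
    T.det = 1 := by
  induction hT using Submonoid.closure_induction with
  | mem _ hx =>
    obtain ⟨i, j, c, hij, rfl⟩ := hx
    exact det_transvection_of_ne i j hij c
  | one => exact det_one
  | mul S T _ _ hS hT => rw [det_mul, hS, hT, one_mul]

theorem exists_mul_eq_one {T : Matrix (Fin n) (Fin n) R} (hT : T ∈ elementarySubmonoid n R) :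
    ∃ S ∈ elementarySubmonoid n R, S * T = 1 := by
  induction hT using Submonoid.closure_induction with
  | mem _ hx =>
    obtain ⟨i, j, c, hij, rfl⟩ := hx
    refine ⟨transvection i j (-c), transvection_mem hij (-c), ?_⟩
    rw [transvection_mul_transvection_same i j hij, neg_add_cancel, transvection_zero]
  | one => exact ⟨1, one_mem _, one_mul 1⟩
  | mul T₁ T₂ _ _ h₁ h₂ =>
    obtain ⟨S₁, hS₁, hmul₁⟩ := h₁
    obtain ⟨S₂, hS₂, hmul₂⟩ := h₂
    refine ⟨S₂ * S₁, mul_mem hS₂ hS₁, ?_⟩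
    rw [mul_assoc, ← mul_assoc S₁, hmul₁, one_mul, hmul₂]

theorem mem_of_mul_mem {T A : Matrix (Fin n) (Fin n) R} (hT : T ∈ elementarySubmonoid n R)
    (hTA : T * A ∈ elementarySubmonoid n R) : A ∈ elementarySubmonoid n R := by
  obtain ⟨S, hS, hST⟩ := exists_mul_eq_one hT
  rw [← one_mul A, ← hST, mul_assoc]
  exact mul_mem hS hTA

theorem transpose_mem {T : Matrix (Fin n) (Fin n) R} (hT : T ∈ elementarySubmonoid n R) :
    Tᵀ ∈ elementarySubmonoid n R := by
  induction hT using Submonoid.closure_induction with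
  | mem _ hx =>
    obtain ⟨i, j, c, hij, rfl⟩ := hx
    rw [transvection, transpose_add, transpose_one, transpose_single]
    exact transvection_mem hij.symm c
  | one => rw [transpose_one]; exact one_mem _
  | mul S T _ _ hS hT => rw [transpose_mul]; exact mul_mem hT hS

theorem one_add_vecMulVec_single_mem {c : Fin n → R} {j : Fin n} (hc : c j = 0) :
    1 + vecMulVec c (Pi.single j 1) ∈ elementarySubmonoid n R := by
  suffices h : c j = 0 ∧ 1 + vecMulVec c (Pi.single j 1) ∈ elementarySubmonoid n R from h.2
  rw [← Finset.univ_sum_single c]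
  refine Finset.sum_induction _
    (fun c ↦ c j = 0 ∧ 1 + vecMulVec c (Pi.single j 1) ∈ elementarySubmonoid n R) ?_ ?_ ?_
  · rintro a b ⟨ha, ha_mem⟩ ⟨hb, hb_mem⟩
    refine ⟨by rw [Pi.add_apply, ha, hb, add_zero], ?_⟩
    have hmul : (1 + vecMulVec a (Pi.single j 1)) * (1 + vecMulVec b (Pi.single j 1)) =
        1 + vecMulVec (a + b) (Pi.single j 1) := by
      rw [add_mul, one_mul, mul_add, mul_one, vecMulVec_mul_vecMulVec, single_one_dotProduct, hb,
        zero_smul, vecMulVec_zero, add_vecMulVec]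
      abel
    exact hmul ▸ mul_mem ha_mem hb_mem
  · exact ⟨rfl, by rw [zero_vecMulVec, add_zero]; exact one_mem _⟩
  · intro i _
    obtain rfl | hij := eq_or_ne i j
    · rw [hc, Pi.single_zero, zero_vecMulVec, add_zero]
      exact ⟨rfl, one_mem _⟩
    · refine ⟨Pi.single_eq_of_ne hij.symm _, ?_⟩
      rw [← transvection_eq_one_add_vecMulVec]
      exact transvection_mem hij (c i)

theorem one_add_single_vecMulVec_mem {c : Fin n → R} {i : Fin n} (hc : c i = 0) :
    1 + vecMulVec (Pi.single i 1) c ∈ elementarySubmonoid n R := by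
  simpa only [transpose_add, transpose_one, transpose_vecMulVec] using
    transpose_mem (one_add_vecMulVec_single_mem hc)

theorem exists_mulVec_eq_of_isUnit {v w : Fin n → R} {j : Fin n} (hu : IsUnit (v j))
    (hvw : v j = w j) : ∃ T ∈ elementarySubmonoid n R, T *ᵥ v = w := by
  obtain ⟨u, hu⟩ := hu.exists_right_inv
  refine ⟨1 + vecMulVec (u • (w - v)) (Pi.single j 1),
    one_add_vecMulVec_single_mem (by simp [hvw]), ?_⟩
  ext i
  simp only [add_mulVec, one_mulVec, vecMulVec_mulVec, single_one_dotProduct, op_smul_eq_smul,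
    Pi.add_apply, Pi.smul_apply, Pi.sub_apply, smul_eq_mul]
  linear_combination (w i - v i) * hu

theorem exists_isUnit_mulVec_zero (hR : HasStableRankOne R) {v w : Fin (n + 1) → R}
    (hwv : w ⬝ᵥ v = 1) : ∃ T ∈ elementarySubmonoid (n + 1) R, IsUnit ((T *ᵥ v) 0) := by
  have hcoprime : IsCoprime (v 0) (vecTail w ⬝ᵥ vecTail v) :=
    ⟨w 0, 1, by simpa [dotProduct, Fin.sum_univ_succ, vecTail] using hwv⟩
  obtain ⟨t, ht⟩ := hR hcoprime
  refine ⟨1 + vecMulVec (Pi.single 0 1) (vecCons 0 (t • vecTail w)),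
    one_add_single_vecMulVec_mem rfl, ?_⟩
  simpa only [add_mulVec, one_mulVec, vecMulVec_mulVec, op_smul_eq_smul, cons_dotProduct, zero_mul,
    zero_add, smul_dotProduct, Pi.add_apply, Pi.smul_apply, Pi.single_eq_same, smul_eq_mul,
    mul_one] using ht

theorem exists_mulVec_eq_single (hR : HasStableRankOne R) {v w : Fin (n + 2) → R}
    (hwv : w ⬝ᵥ v = 1) :
    ∃ T ∈ elementarySubmonoid (n + 2) R, T *ᵥ v = Pi.single 0 1 := by
  obtain ⟨T₁, hT₁, hunit⟩ := exists_isUnit_mulVec_zero hR hwv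
  let u := (T₁ *ᵥ v) 0
  obtain ⟨T₂, hT₂, hmul₂⟩ := exists_mulVec_eq_of_isUnit (v := T₁ *ᵥ v)
    (w := vecCons u 1) (j := 0) hunit rfl
  obtain ⟨T₃, hT₃, hmul₃⟩ := exists_mulVec_eq_of_isUnit (v := vecCons u 1)
    (w := (1 : Fin (n + 2) → R)) (j := 1) isUnit_one rfl
  obtain ⟨T₄, hT₄, hmul₄⟩ := exists_mulVec_eq_of_isUnit (v := (1 : Fin (n + 2) → R))
    (w := Pi.single 0 1) (j := 0) isUnit_one rfl
  refine ⟨T₄ * T₃ * T₂ * T₁, mul_mem (mul_mem (mul_mem hT₄ hT₃) hT₂) hT₁, ?_⟩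
  simp only [← mulVec_mulVec, hmul₂, hmul₃, hmul₄]

end elementarySubmonoid

/-- The stabilization homomorphism `B ↦ diag(1, B)`, along which the induction on the size of the
matrix proceeds. -/
def stabilize : Matrix (Fin n) (Fin n) R →* Matrix (Fin (n + 1)) (Fin (n + 1)) R where
  toFun B := of (vecCons (vecCons 1 0) fun i ↦ vecCons 0 (B i))
  map_one' := by
    ext i j
    cases i using Fin.cases <;> cases j using Fin.cases <;>
      simp [one_apply, (Fin.succ_ne_zero _).symm]
  map_mul' A B := by
    ext i j
    cases i using Fin.cases <;> cases j using Fin.cases <;>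
      simp [mul_apply, Fin.sum_univ_succ]

theorem stabilize_transvection (i j : Fin n) (c : R) :
    stabilize (transvection i j c) = transvection i.succ j.succ c := by
  ext k l
  cases k using Fin.cases <;> cases l using Fin.cases <;>
    simp [stabilize, transvection, one_apply, single_apply, (Fin.succ_ne_zero _).symm]

theorem stabilize_mem_elementarySubmonoid {B : Matrix (Fin n) (Fin n) R}
    (hB : B ∈ elementarySubmonoid n R) : stabilize B ∈ elementarySubmonoid (n + 1) R := by
  suffices h : elementarySubmonoid n R ≤ (elementarySubmonoid (n + 1) R).comap stabilize from h hB
  rw [elementarySubmonoid, Submonoid.closure_le]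
  rintro _ ⟨i, j, c, hij, rfl⟩
  rw [SetLike.mem_coe, Submonoid.mem_comap, stabilize_transvection]
  exact elementarySubmonoid.transvection_mem ((Fin.succ_injective n).ne hij) c

theorem eq_stabilize_mul_one_add_vecMulVec {A : Matrix (Fin (n + 1)) (Fin (n + 1)) R}
    (hA : A.col 0 = Pi.single 0 1) :
    A = stabilize (A.submatrix Fin.succ Fin.succ) *
      (1 + vecMulVec (Pi.single 0 1) (vecCons 0 fun j ↦ A 0 j.succ)) := by
  rw [mul_add, mul_one, mul_vecMulVec, mulVec_single_one]
  ext i j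
  have hcol : A i 0 = Pi.single (M := fun _ ↦ R) 0 1 i := congrFun hA i
  cases i using Fin.cases <;> cases j using Fin.cases <;>
    simp [stabilize, hcol]

theorem IsGE.mem_of_col_zero_eq_single (hn : IsGE R n)
    {A : Matrix (Fin (n + 1)) (Fin (n + 1)) R} (hdet : A.det = 1)
    (hcol : A.col 0 = Pi.single 0 1) : A ∈ elementarySubmonoid (n + 1) R := by
  have hcol_apply (i : Fin (n + 1)) : A i 0 = Pi.single (M := fun _ ↦ R) 0 1 i := congrFun hcol i
  have hdet_submatrix : (A.submatrix Fin.succ Fin.succ).det = 1 := by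
    simpa [det_succ_column_zero A, Fin.sum_univ_succ, hcol_apply] using hdet
  rw [eq_stabilize_mul_one_add_vecMulVec hcol]
  exact mul_mem (stabilize_mem_elementarySubmonoid (hn _ hdet_submatrix))
    (elementarySubmonoid.one_add_single_vecMulVec_mem rfl)

theorem HasStableRankOne.isGE_add_two (hR : HasStableRankOne R) (hn : IsGE R (n + 1)) :
    IsGE R (n + 2) := by
  intro A hA
  have hunimodular : A⁻¹ 0 ⬝ᵥ A.col 0 = 1 :=
    congrFun₂ (nonsing_inv_mul A (hA ▸ isUnit_one)) 0 0
  obtain ⟨T, hT, hTA⟩ := elementarySubmonoid.exists_mulVec_eq_single hR hunimodular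
  refine elementarySubmonoid.mem_of_mul_mem hT (hn.mem_of_col_zero_eq_single ?_ hTA)
  rw [det_mul, elementarySubmonoid.det_eq_one hT, hA, one_mul]

theorem isGE_one : IsGE R 1 := by
  intro A hA
  have hA_one : A = 1 := by
    ext i j
    rw [Subsingleton.elim i 0, Subsingleton.elim j 0, ← det_fin_one A, hA, one_apply_eq]
  exact hA_one ▸ one_mem _

theorem HasStableRankOne.isGE_succ (hR : HasStableRankOne R) : ∀ n, IsGE R (n + 1)
  | 0 => isGE_one
  | n + 1 => hR.isGE_add_two (hR.isGE_succ n)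

end

theorem stmt_14_general (R : Type*) [CommRing R] (hR : HasStableRankOne R) : IsGERing R := by
  rintro (_ | n) hn
  · contradiction
  · exact hR.isGE_succ n

/-- Every finite commutative ring is a generalized Euclidean ring. -/
theorem stmt_14 (R : Type*) [CommRing R] [Finite R] : IsGERing R :=
  stmt_14_general R (.of_finite_maximalSpectrum R)
end
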